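/- For every integer n ≥ 6, the three-element vertex set {p_2, p_{⌊n/2⌋+1}, p_n} of the convex polytope graph Δ_n is independent (its three vertices are pairwise non-adjacent in Δ_n) and is a resolving set of Δ_n. -/

import Mathlib

/-- Vertices of the heptagonal circular ladder: four families indexed by `ZMod n`. -/
inductive HCLVertex (n : ℕ) : Type
  | p (t : ZMod n) : HCLVertex n
  | q (t : ZMod n) : HCLVertex n
  | r (t : ZMod n) : HCLVertex n
  | s (t : ZMod n) : HCLVertex n
deriving DecidableEq

/-- Base relation giving the edges of the heptagonal circular ladder `Γ_n`:
`p_t p_{t+1}`, `p_t q_t`, `q_t r_t`, `r_t s_t`, `s_t r_{t+1}` (indices mod `n`). -/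
def gammaRel (n : ℕ) : HCLVertex n → HCLVertex n → Prop
  | .p t, .p u => u = t + 1
  | .p t, .q u => u = t
  | .q t, .r u => u = t
  | .r t, .s u => u = t
  | .s t, .r u => u = t + 1
  | _, _ => False

/-- The heptagonal circular ladder `Γ_n`. -/
def Gamma (n : ℕ) : SimpleGraph (HCLVertex n) :=
  SimpleGraph.fromRel (gammaRel n)

/-- The extra edges `r_t q_{t+1}` added to `Γ_n` to obtain `Δ_n`. -/
def deltaRel (n : ℕ) : HCLVertex n → HCLVertex n → Prop
  | .r t, .q u => u = t + 1
  | _, _ => False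

/-- The convex polytope graph `Δ_n`, obtained from `Γ_n` by adding the edges `r_t q_{t+1}`. -/
def Delta (n : ℕ) : SimpleGraph (HCLVertex n) :=
  SimpleGraph.fromRel (fun v w => gammaRel n v w ∨ deltaRel n v w)

/-- `W` is a resolving set of `G`: every pair of distinct vertices is distinguished by
its distance to some vertex of `W`. -/
def IsResolving {V : Type*} (G : SimpleGraph V) (W : Set V) : Prop :=
  ∀ u v : V, u ≠ v → ∃ w ∈ W, G.dist w u ≠ G.dist w v

/-- Distance from a vertex `x` to an edge `e = yz`: `min (d x y) (d x z)`. -/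
noncomputable def edgeDist {V : Type*} (G : SimpleGraph V) (x : V) (e : Sym2 V) : ℕ :=
  Sym2.lift ⟨fun y z => min (G.dist x y) (G.dist x z), fun y z => min_comm _ _⟩ e

/-- `W` is an edge resolving set of `G`: every pair of distinct edges is distinguished by
its distance to some vertex of `W`. -/
def IsEdgeResolving {V : Type*} (G : SimpleGraph V) (W : Set V) : Prop :=
  ∀ e ∈ G.edgeSet, ∀ f ∈ G.edgeSet, e ≠ f → ∃ w ∈ W, edgeDist G w e ≠ edgeDist G w f

/-- A function vanishing at `u`, increasing by at most one along edges, and decreasing by one along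
some edge at every other vertex is the distance from `u`. -/
theorem SimpleGraph.dist_eq_of_descent {V : Type*} (G : SimpleGraph V) (u : V) (f : V → ℕ)
    (h0 : f u = 0) (hle : ∀ v w, G.Adj v w → f w ≤ f v + 1)
    (hdesc : ∀ v, v ≠ u → ∃ w, G.Adj w v ∧ f v = f w + 1) (v : V) : G.dist u v = f v := by
  have hwalk : ∀ m v, f v = m → ∃ W : G.Walk u v, W.length = m := by
    intro m
    induction m with
    | zero =>
      intro v hv
      by_cases huv : v = u
      · subst huv
        exact ⟨.nil, rfl⟩
      · obtain ⟨w, -, hw⟩ := hdesc v huv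
        omega
    | succ m ih =>
      intro v hv
      obtain ⟨w, hwv, hw⟩ := hdesc v (by rintro rfl; omega)
      obtain ⟨W, hW⟩ := ih w (by omega)
      exact ⟨W.concat hwv, by simp [hW]⟩
  have hlower : ∀ {a b : V} (W : G.Walk a b), f b ≤ f a + W.length := by
    intro a b W
    induction W with
    | nil => simp
    | cons h W ih =>
      have := hle _ _ h
      rw [SimpleGraph.Walk.length_cons]
      omega
  obtain ⟨W, hW⟩ := hwalk _ v rfl
  obtain ⟨W', hW'⟩ := W.reachable.exists_walk_length_eq_dist
  have h1 := SimpleGraph.dist_le W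
  have h2 := hlower W'
  omega

theorem ZMod.val_add_one_eq_ite {n : ℕ} (hn : 2 ≤ n) (x : ZMod n) :
    (x + 1).val = if x.val + 1 = n then 0 else x.val + 1 := by
  have : NeZero n := ⟨by omega⟩
  have : Fact (1 < n) := ⟨hn⟩
  have hx := x.val_lt
  rw [ZMod.val_add, ZMod.val_one]
  split_ifs with h
  · rw [h, Nat.mod_self]
  · exact Nat.mod_eq_of_lt (by omega)

theorem ZMod.val_add_one_sub_eq_ite {n : ℕ} (hn : 2 ≤ n) (t a : ZMod n) :
    (t + 1 - a).val = if (t - a).val + 1 = n then 0 else (t - a).val + 1 := by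
  rw [← ZMod.val_add_one_eq_ite hn, add_sub_right_comm]

theorem ZMod.val_sub_eq_ite {n : ℕ} [NeZero n] (t a : ZMod n) :
    (t - a).val = if a.val ≤ t.val then t.val - a.val else t.val + n - a.val := by
  have ht := t.val_lt
  have ha := a.val_lt
  split_ifs with h
  · exact ZMod.val_sub h
  · have h1 := ZMod.val_sub (le_of_lt (not_le.mp h))
    have h2 : t - a = -(a - t) := by ring
    have : NeZero (a - t) := ⟨fun h3 => h (by rw [sub_eq_zero.mp h3])⟩
    rw [h2, ZMod.val_neg_of_ne_zero, h1]
    omega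

/-- The distance in `Δ_n` from `p_a` to a vertex, in terms of the cyclic offset of indices. -/
def deltaDistFromP {n : ℕ} (a : ZMod n) : HCLVertex n → ℕ
  | .p t => min (t - a).val (n - (t - a).val)
  | .q t => 1 + min (t - a).val (n - (t - a).val)
  | .r t => 2 + min (t - a).val (n - 1 - (t - a).val)
  | .s t => 3 + min (t - a).val (n - 2 - (t - a).val)

theorem Delta_adj {n : ℕ} {v w : HCLVertex n} : (Delta n).Adj v w ↔
    v ≠ w ∧ ((gammaRel n v w ∨ deltaRel n v w) ∨ gammaRel n w v ∨ deltaRel n w v) :=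
  SimpleGraph.fromRel_adj _ _ _

theorem deltaDistFromP_le_of_rel {n : ℕ} (hn : 3 ≤ n) (a : ZMod n) {v w : HCLVertex n}
    (h : gammaRel n v w ∨ deltaRel n v w) :
    deltaDistFromP a w ≤ deltaDistFromP a v + 1 ∧
      deltaDistFromP a v ≤ deltaDistFromP a w + 1 := by
  have : NeZero n := ⟨by omega⟩
  have hsucc := fun t : ZMod n => ZMod.val_add_one_sub_eq_ite (by omega) t a
  rcases v with t | t | t | t <;> rcases w with u | u | u | u <;> have ht := (t - a).val_lt <;>
    simp only [gammaRel, deltaRel, or_false, false_or, or_self] at h <;> subst h <;>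
    simp only [deltaDistFromP, hsucc] <;> (try split_ifs) <;> omega

theorem Delta_dist_p {n : ℕ} (hn : 3 ≤ n) (a : ZMod n) (v : HCLVertex n) :
    (Delta n).dist (.p a) v = deltaDistFromP a v := by
  have : NeZero n := ⟨by omega⟩
  have : Fact (1 < n) := ⟨by omega⟩
  refine SimpleGraph.dist_eq_of_descent _ _ _ (by simp [deltaDistFromP]) ?_ ?_ v
  · intro v w h
    rcases (Delta_adj.mp h).2 with h | h
    · exact (deltaDistFromP_le_of_rel hn a h).1
    · exact (deltaDistFromP_le_of_rel hn a h).2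
  have hsucc := fun t : ZMod n => ZMod.val_add_one_sub_eq_ite (by omega) t a
  rintro (t | t | t | t) hv
  · have ht := (t - a).val_lt
    have hpos : (t - a).val ≠ 0 := by
      rw [ne_eq, ZMod.val_eq_zero, sub_eq_zero]
      rintro rfl
      exact hv rfl
    by_cases hk : (t - a).val ≤ n - (t - a).val
    · refine ⟨.p (t - 1), Delta_adj.mpr ⟨by simp, by simp [gammaRel]⟩, ?_⟩
      have h := hsucc (t - 1)
      have := (t - 1 - a).val_lt
      rw [sub_add_cancel] at h
      simp only [deltaDistFromP]
      split_ifs at h <;> omega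
    · refine ⟨.p (t + 1), Delta_adj.mpr ⟨by simp, by simp [gammaRel]⟩, ?_⟩
      simp only [deltaDistFromP, hsucc]
      split_ifs <;> omega
  · refine ⟨.p t, Delta_adj.mpr ⟨by simp, by simp [gammaRel]⟩, ?_⟩
    simp only [deltaDistFromP]
    omega
  · have ht := (t - a).val_lt
    by_cases hk : (t - a).val ≤ n - 1 - (t - a).val
    · refine ⟨.q t, Delta_adj.mpr ⟨by simp, by simp [gammaRel]⟩, ?_⟩
      simp only [deltaDistFromP]
      omega
    · refine ⟨.q (t + 1), Delta_adj.mpr ⟨by simp, by simp [deltaRel]⟩, ?_⟩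
      simp only [deltaDistFromP, hsucc]
      split_ifs <;> omega
  · have ht := (t - a).val_lt
    by_cases hk : (t - a).val ≤ n - 2 - (t - a).val
    · refine ⟨.r t, Delta_adj.mpr ⟨by simp, by simp [gammaRel]⟩, ?_⟩
      simp only [deltaDistFromP]
      omega
    · refine ⟨.r (t + 1), Delta_adj.mpr ⟨by simp, by simp [gammaRel]⟩, ?_⟩
      simp only [deltaDistFromP, hsucc]
      split_ifs <;> omega

/-- In `Δ_n`, the vertices of the families `p`, `q`, `r`, `s` with index `t` have, for
`c = 0, 1, 2, 3` respectively, this distance from `p_a`. -/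
def layerDist (n c a t : ℕ) : ℕ :=
  c + min (if a ≤ t then t - a else t + n - a)
    (n - (c - 1) - (if a ≤ t then t - a else t + n - a))

theorem layerDist_cases {n c j t d0 d2 dm : ℕ} (hn : 6 ≤ n) (hc : c ≤ 3) (ht : t < n)
    (hj : c - 1 = j) (h0 : layerDist n c 0 t = d0) (h2 : layerDist n c 2 t = d2)
    (hm : layerDist n c (n / 2 + 1) t = dm) :
    (t = 0 ∧ d0 = c ∧ d2 + j = c + 2 ∧ c + n / 2 ≤ dm + 1 ∧ dm ≤ c + n / 2) ∨
    (t = 1 ∧ d0 = c + 1 ∧ d2 = c + (1 - j) ∧ dm + j = c + n / 2) ∨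
    (2 ≤ t ∧ t ≤ n / 2 ∧ 2 * t + j ≤ n ∧ d0 = c + t ∧ d2 + 2 = c + t ∧
      dm + j + t = c + n / 2 + 1) ∨
    (t = n / 2 ∧ n < 2 * t + j ∧ d0 + j + t = c + n ∧ d2 + 2 = c + t ∧ dm = c) ∨
    (n / 2 < t ∧ 2 * t + j ≤ n + 4 ∧ d0 + j + t = c + n ∧ d2 + 2 = c + t ∧
      dm + n / 2 + 1 = c + t) ∨
    (n / 2 < t ∧ n + 4 < 2 * t + j ∧ d0 = c + (n - j - t) ∧ d2 + j + t = c + n + 2 ∧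
      dm + n / 2 + 1 = c + t) := by
  have hregion : t = 0 ∨ t = 1 ∨ (2 ≤ t ∧ t ≤ n / 2 ∧ 2 * t + j ≤ n) ∨
      (t = n / 2 ∧ n < 2 * t + j) ∨ (n / 2 < t ∧ 2 * t + j ≤ n + 4) ∨
      (n / 2 < t ∧ n + 4 < 2 * t + j) := by omega
  subst h0 h2 hm
  simp only [layerDist, hj]
  replace hj : j ≤ 2 := by omega
  clear hc
  rcases hregion with h | h | h | h | h | h
  · refine Or.inl ⟨h, ?_, ?_, ?_, ?_⟩ <;> split_ifs <;> omega
  · refine Or.inr (Or.inl ⟨h, ?_, ?_, ?_⟩) <;> split_ifs <;> omega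
  · refine Or.inr (Or.inr (Or.inl ⟨h.1, h.2.1, h.2.2, ?_, ?_, ?_⟩)) <;> split_ifs <;> omega
  · refine Or.inr (Or.inr (Or.inr (Or.inl ⟨h.1, h.2, ?_, ?_, ?_⟩))) <;> split_ifs <;> omega
  · refine Or.inr (Or.inr (Or.inr (Or.inr (Or.inl ⟨h.1, h.2, ?_, ?_, ?_⟩)))) <;>
      split_ifs <;> omega
  · refine Or.inr (Or.inr (Or.inr (Or.inr (Or.inr ⟨h.1, h.2, ?_, ?_, ?_⟩)))) <;>
      split_ifs <;> omega

set_option maxHeartbeats 1000000 in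
theorem layerDist_injective {n c c' t t' : ℕ} (hn : 6 ≤ n) (hc : c ≤ 3) (hc' : c' ≤ 3)
    (ht : t < n) (ht' : t' < n) (h0 : layerDist n c 0 t = layerDist n c' 0 t')
    (h2 : layerDist n c 2 t = layerDist n c' 2 t')
    (hm : layerDist n c (n / 2 + 1) t = layerDist n c' (n / 2 + 1) t') : c = c' ∧ t = t' := by
  obtain ⟨j, hj⟩ : ∃ j, c - 1 = j := ⟨_, rfl⟩
  obtain ⟨j', hj'⟩ : ∃ j, c' - 1 = j := ⟨_, rfl⟩
  have h := layerDist_cases hn hc ht hj h0 h2 hm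
  have h' := layerDist_cases hn hc' ht' hj' rfl rfl rfl
  generalize layerDist n c' 0 t' = d0 at h h'
  generalize layerDist n c' 2 t' = d2 at h h'
  generalize layerDist n c' (n / 2 + 1) t' = dm at h h'
  clear h0 h2 hm
  have hcj : c = j + 1 ∨ c = 0 ∧ j = 0 := by omega
  have hcj' : c' = j' + 1 ∨ c' = 0 ∧ j' = 0 := by omega
  clear hj hj'
  rcases h with h | h | h | h | h | h <;> rcases h' with h' | h' | h' | h' | h' | h' <;> omega

theorem deltaDistFromP_eq_layerDist {n : ℕ} [NeZero n] (v : HCLVertex n) : ∃ c t,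
    c ≤ 3 ∧ t < n ∧ (∀ a, deltaDistFromP a v = layerDist n c a.val t) ∧
      v = match c with
        | 0 => .p t
        | 1 => .q t
        | 2 => .r t
        | _ => .s t := by
  rcases v with t | t | t | t
  · exact ⟨0, t.val, by omega, t.val_lt, fun a => by
      simp [deltaDistFromP, layerDist, ZMod.val_sub_eq_ite], by simp⟩
  · exact ⟨1, t.val, by omega, t.val_lt, fun a => by
      simp [deltaDistFromP, layerDist, ZMod.val_sub_eq_ite], by simp⟩
  · exact ⟨2, t.val, by omega, t.val_lt, fun a => by
      simp [deltaDistFromP, layerDist, ZMod.val_sub_eq_ite], by simp⟩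
  · exact ⟨3, t.val, by omega, t.val_lt, fun a => by
      simp [deltaDistFromP, layerDist, ZMod.val_sub_eq_ite], by simp⟩

theorem delta_p_set_independent_resolving (n : ℕ) (hn : 6 ≤ n) :
    (∀ u ∈ ({HCLVertex.p (2 : ZMod n), HCLVertex.p ((n / 2 + 1 : ℕ) : ZMod n),
        HCLVertex.p ((n : ℕ) : ZMod n)} : Set (HCLVertex n)),
      ∀ v ∈ ({HCLVertex.p (2 : ZMod n), HCLVertex.p ((n / 2 + 1 : ℕ) : ZMod n),
        HCLVertex.p ((n : ℕ) : ZMod n)} : Set (HCLVertex n)), ¬ (Delta n).Adj u v) ∧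
    IsResolving (Delta n)
      {HCLVertex.p (2 : ZMod n), HCLVertex.p ((n / 2 + 1 : ℕ) : ZMod n),
        HCLVertex.p ((n : ℕ) : ZMod n)} := by
  have : NeZero n := ⟨by omega⟩
  have h2 : (2 : ZMod n).val = 2 := by
    rw [← Nat.cast_ofNat, ZMod.val_natCast_of_lt (by omega)]
  have hm : ((n / 2 + 1 : ℕ) : ZMod n).val = n / 2 + 1 := ZMod.val_natCast_of_lt (by omega)
  have h0 : ((n : ℕ) : ZMod n).val = 0 := by simp
  constructor
  · intro u hu v hv h
    rw [← SimpleGraph.dist_eq_one_iff_adj] at h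
    simp only [Set.mem_insert_iff, Set.mem_singleton_iff] at hu hv
    rcases hu with rfl | rfl | rfl <;> rcases hv with rfl | rfl | rfl <;>
      rw [Delta_dist_p (by omega)] at h <;>
      simp only [deltaDistFromP, ZMod.val_sub_eq_ite, h2, hm, h0] at h <;>
      split_ifs at h <;> omega
  · intro u v huv
    by_contra! h
    have hd2 := h (.p 2) (by simp)
    have hdm := h (.p ((n / 2 + 1 : ℕ) : ZMod n)) (by simp)
    have hd0 := h (.p ((n : ℕ) : ZMod n)) (by simp)
    simp only [Delta_dist_p (show 3 ≤ n by omega)] at hd2 hdm hd0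
    obtain ⟨c, t, hc, ht, hu, rfl⟩ := deltaDistFromP_eq_layerDist u
    obtain ⟨c', t', hc', ht', hv, rfl⟩ := deltaDistFromP_eq_layerDist v
    rw [hu, hv, h2] at hd2
    rw [hu, hv, hm] at hdm
    rw [hu, hv, h0] at hd0
    obtain ⟨rfl, rfl⟩ := layerDist_injective hn hc hc' ht ht' hd0 hd2 hdm
    exact huv rfl
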